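/- Let X be a real linear space, (Y, N) a fuzzy normed space, (Z, N′) a fuzzy normed space, α a real number with 0 < |α| < 4, and φ : X × X → Z with φ(2x, 2y) = α · φ(x, y) for all x, y ∈ X. Suppose f, g, h : X → Y are even functions with f(0) = g(0) = h(0) = 0 such that N (f(x+y) + f(x−y) − 2g(x) − 2h(y)) t ≥ N′ (φ(x, y)) t for all x, y ∈ X and all t ∈ ℝ. Then for all integers n > m ≥ 0, all x ∈ X and all t > 0, N (f(2^n x)/4^n − f(2^m x)/4^m) (Σ_{k=m+1}^{n} |α|^(k−1) · t / 4^k) ≥ N″ x t, where N″ x t = min {N′ (φ(x,x)) (t/3), N′ (φ(x,0)) (t/3), N′ (φ(0,x)) (t/3)}. -/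

import Mathlib

/-!
Write `D x y = f (x + y) + f (x - y) - 2 g x - 2 h y`. Since `f` is even and `f`, `g`, `h` vanish
at `0`, we have `f (2x) - 4 f x = D x x - D x 0 - D 0 x`, so the triangle inequality (N4) gives
`N (f (2x) - 4 f x) t ≥ N″ x t`. The homogeneity of `φ` gives `N″ (2^k x) (|α|^k t) = N″ x t`;
hence each difference `f (2^(k+1) x) / 4^(k+1) - f (2^k x) / 4^k` is controlled by `N″ x t` at the
radius `|α|^k t / 4^(k+1)`. Summing these differences with (N4) costs nothing, because the lower
bound is the same for every `k`.
-/

open Filter Finset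

/-- A fuzzy norm on a real vector space, following Bag–Samanta. -/
structure IsFuzzyNorm {X : Type*} [AddCommGroup X] [Module ℝ X] (N : X → ℝ → ℝ) : Prop where
  nonneg : ∀ (x : X) (t : ℝ), 0 ≤ N x t
  le_one : ∀ (x : X) (t : ℝ), N x t ≤ 1
  eq_zero_of_nonpos : ∀ (x : X) (c : ℝ), c ≤ 0 → N x c = 0
  eq_zero_iff : ∀ x : X, x = 0 ↔ ∀ c : ℝ, 0 < c → N x c = 1
  smul_eq : ∀ (c : ℝ) (x : X) (t : ℝ), c ≠ 0 → N (c • x) t = N x (t / |c|)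
  min_le_add : ∀ (x y : X) (s t : ℝ), min (N x s) (N y t) ≤ N (x + y) (s + t)
  mono : ∀ x : X, Monotone (N x)
  tendsto_one : ∀ x : X, Tendsto (N x) atTop (nhds 1)

/-- Convergence of a sequence to a fuzzy limit in a fuzzy normed space. -/
def FuzzyTendsto {X : Type*} [AddCommGroup X] [Module ℝ X] (N : X → ℝ → ℝ)
    (xs : ℕ → X) (x : X) : Prop :=
  ∀ t : ℝ, 0 < t → Tendsto (fun n => N (xs n - x) t) atTop (nhds 1)

/-- Cauchy sequences in a fuzzy normed space. -/
def FuzzyCauchy {X : Type*} [AddCommGroup X] [Module ℝ X] (N : X → ℝ → ℝ)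
    (xs : ℕ → X) : Prop :=
  ∀ ε : ℝ, 0 < ε → ∀ t : ℝ, 0 < t → ∃ n₀ : ℕ, ∀ n ≥ n₀, ∀ p : ℕ, 0 < p →
    1 - ε < N (xs (n + p) - xs n) t

/-- A fuzzy normed space is complete (a fuzzy Banach space) if every Cauchy
sequence converges. -/
def IsFuzzyComplete {X : Type*} [AddCommGroup X] [Module ℝ X] (N : X → ℝ → ℝ) : Prop :=
  ∀ xs : ℕ → X, FuzzyCauchy N xs → ∃ x : X, FuzzyTendsto N xs x

/-- Quadratic functional equation. -/
def IsQuadratic {X Y : Type*} [AddCommGroup X] [AddCommGroup Y] (Q : X → Y) : Prop :=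
  ∀ x y : X, Q (x + y) + Q (x - y) = 2 • Q x + 2 • Q y

/-- Additive functional equation. -/
def IsAdditive {X Y : Type*} [AddCommGroup X] [AddCommGroup Y] (T : X → Y) : Prop :=
  ∀ x y : X, T (x + y) = T x + T y

/-- The control function `N″ x t = min {N′(φ(x,x))(t/3), N′(φ(x,0))(t/3), N′(φ(0,x))(t/3)}`. -/
noncomputable def Ndd {X Z : Type*} [Zero X] (N' : Z → ℝ → ℝ) (φ : X × X → Z) (x : X) (t : ℝ) : ℝ :=
  min (min (N' (φ (x, x)) (t / 3)) (N' (φ (x, 0)) (t / 3))) (N' (φ (0, x)) (t / 3))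

lemma IsFuzzyNorm.map_neg {Y : Type*} [AddCommGroup Y] [Module ℝ Y] {N : Y → ℝ → ℝ}
    (hN : IsFuzzyNorm N) (y : Y) (t : ℝ) : N (-y) t = N y t := by
  have := hN.smul_eq (-1) y t (by norm_num)
  simpa using this

/-- The bound for one doubling, from `f (2x) - 4 f x = D x x - D x 0 - D 0 x`, where
`D x y = f (x + y) + f (x - y) - 2 g x - 2 h y`. -/
lemma Ndd_le_double_sub
    {X Y Z : Type*} [AddCommGroup X] [AddCommGroup Y] [Module ℝ Y]
    {N : Y → ℝ → ℝ} {N' : Z → ℝ → ℝ} (hN : IsFuzzyNorm N) {φ : X × X → Z} {f g h : X → Y}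
    (hfeven : ∀ x : X, f (-x) = f x) (hf0 : f 0 = 0) (hg0 : g 0 = 0) (hh0 : h 0 = 0)
    (hineq : ∀ x y : X, ∀ t : ℝ,
      N' (φ (x, y)) t ≤ N (f (x + y) + f (x - y) - 2 • g x - 2 • h y) t)
    (x : X) (t : ℝ) : Ndd N' φ x t ≤ N (f (2 • x) - 4 • f x) t := by
  have h1 := hineq x x (t / 3)
  have h2 := hineq x 0 (t / 3)
  have h3 := hineq 0 x (t / 3)
  rw [← hN.map_neg] at h2 h3
  have key := (min_le_min (min_le_min h1 h2) h3).trans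
    ((min_le_min_right _ (hN.min_le_add _ _ _ _)).trans (hN.min_le_add _ _ _ _))
  have ht : t / 3 + t / 3 + t / 3 = t := by ring
  rw [ht] at key
  refine key.trans_eq ?_
  congr 1
  simp only [sub_self, add_zero, zero_add, sub_zero, zero_sub, hfeven, hf0, hg0, hh0, smul_zero,
    two_nsmul x]
  abel

lemma Ndd_two_smul
    {X Z : Type*} [AddCommGroup X] [AddCommGroup Z] [Module ℝ Z]
    {N' : Z → ℝ → ℝ} (hN' : IsFuzzyNorm N') {α : ℝ} (hα0 : 0 < |α|) {φ : X × X → Z}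
    (hφ : ∀ x y : X, φ (2 • x, 2 • y) = α • φ (x, y)) (x : X) (t : ℝ) :
    Ndd N' φ (2 • x) (|α| * t) = Ndd N' φ x t := by
  have hα : α ≠ 0 := abs_pos.mp hα0
  have h2 := hφ x 0
  have h3 := hφ 0 x
  rw [smul_zero] at h2 h3
  have ht : |α| * t / 3 / |α| = t / 3 := by field_simp
  simp only [Ndd, hφ x x, h2, h3, hN'.smul_eq α _ _ hα, ht]

lemma Ndd_two_pow_smul
    {X Z : Type*} [AddCommGroup X] [Module ℝ X] [AddCommGroup Z] [Module ℝ Z]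
    {N' : Z → ℝ → ℝ} (hN' : IsFuzzyNorm N') {α : ℝ} (hα0 : 0 < |α|) {φ : X × X → Z}
    (hφ : ∀ x y : X, φ (2 • x, 2 • y) = α • φ (x, y)) (x : X) (t : ℝ) (k : ℕ) :
    Ndd N' φ ((2 : ℝ) ^ k • x) (|α| ^ k * t) = Ndd N' φ x t := by
  induction k with
  | zero => simp
  | succ k ih =>
    have hx : (2 : ℝ) ^ (k + 1) • x = 2 • ((2 : ℝ) ^ k • x) := by module
    rw [hx, pow_succ', mul_assoc, Ndd_two_smul hN' hα0 hφ, ih]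

/-- The telescoping estimate (3.24) in the proof of Proposition 3.2. -/
theorem fuzzy_pexider_even_telescoping
    {X Y Z : Type*} [AddCommGroup X] [Module ℝ X]
    [AddCommGroup Y] [Module ℝ Y] [AddCommGroup Z] [Module ℝ Z]
    (N : Y → ℝ → ℝ) (N' : Z → ℝ → ℝ)
    (hN : IsFuzzyNorm N) (hN' : IsFuzzyNorm N')
    (α : ℝ) (hα0 : 0 < |α|) (hα4 : |α| < 4)
    (φ : X × X → Z)
    (hφ : ∀ x y : X, φ (2 • x, 2 • y) = α • φ (x, y))
    (f g h : X → Y)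
    (hfeven : ∀ x : X, f (-x) = f x)
    (hgeven : ∀ x : X, g (-x) = g x)
    (hheven : ∀ x : X, h (-x) = h x)
    (hf0 : f 0 = 0) (hg0 : g 0 = 0) (hh0 : h 0 = 0)
    (hineq : ∀ x y : X, ∀ t : ℝ,
      N' (φ (x, y)) t ≤ N (f (x + y) + f (x - y) - 2 • g x - 2 • h y) t) :
    ∀ n m : ℕ, m < n → ∀ x : X, ∀ t : ℝ, 0 < t →
      Ndd N' φ x t ≤
        N (((4 : ℝ) ^ n)⁻¹ • f (((2 : ℝ) ^ n) • x) - ((4 : ℝ) ^ m)⁻¹ • f (((2 : ℝ) ^ m) • x))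
          (∑ k ∈ Finset.Ioc m n, |α| ^ (k - 1) * t / (4 : ℝ) ^ k) := by
  have step : ∀ (k : ℕ) (x : X) (t : ℝ), Ndd N' φ x t ≤
      N (((4 : ℝ) ^ (k + 1))⁻¹ • f (((2 : ℝ) ^ (k + 1)) • x)
        - ((4 : ℝ) ^ k)⁻¹ • f (((2 : ℝ) ^ k) • x)) (|α| ^ k * t / (4 : ℝ) ^ (k + 1)) := by
    intro k x t
    have h4 : (0 : ℝ) < 4 ^ (k + 1) := by positivity
    have hx : (2 : ℝ) ^ (k + 1) • x = 2 • ((2 : ℝ) ^ k • x) := by module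
    have hy : ((4 : ℝ) ^ (k + 1))⁻¹ • f (((2 : ℝ) ^ (k + 1)) • x)
        - ((4 : ℝ) ^ k)⁻¹ • f (((2 : ℝ) ^ k) • x)
        = ((4 : ℝ) ^ (k + 1))⁻¹ • (f (2 • ((2 : ℝ) ^ k • x)) - 4 • f ((2 : ℝ) ^ k • x)) := by
      have hc : ((4 : ℝ) ^ k)⁻¹ = ((4 : ℝ) ^ (k + 1))⁻¹ * 4 := by
        rw [pow_succ]; field_simp
      rw [hx, hc]
      module
    have ht : |α| ^ k * t / (4 : ℝ) ^ (k + 1) / |((4 : ℝ) ^ (k + 1))⁻¹| = |α| ^ k * t := by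
      rw [abs_of_pos (inv_pos.mpr h4)]; field_simp
    rw [hy, hN.smul_eq _ _ _ (inv_ne_zero h4.ne'), ht, ← Ndd_two_pow_smul hN' hα0 hφ x t k]
    exact Ndd_le_double_sub hN hfeven hf0 hg0 hh0 hineq _ _
  intro n m hmn x t _
  induction n, hmn using Nat.le_induction with
  | base => simpa using step m x t
  | succ n hn ih =>
    rw [← Finset.insert_Ioc_right_eq_Ioc_add_one (by omega), Finset.sum_insert (by simp),
      Nat.add_sub_cancel]
    refine (le_min (step n x t) ih).trans ((hN.min_le_add _ _ _ _).trans_eq ?_)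
    rw [sub_add_sub_cancel]
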